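/- For all μ > 0, ε ≥ 0, and α ∈ (0,1), one has 1 − Φ(Φ⁻¹(1−α) − μ) ≤ e^ε·α + δ_μ(ε), where δ_μ(ε) = Φ(−ε/μ + μ/2) − e^ε·Φ(−ε/μ − μ/2). (This is the analytic core of the conversion from μ-GDP to (ε, δ)-differential privacy: the Gaussian trade-off function G_μ dominates the trade-off function f_{ε,δ_μ(ε)}.) -/

import Mathlib

open MeasureTheory ProbabilityTheory Real

/-- The standard normal CDF `Φ`. -/
noncomputable def Phi : ℝ → ℝ := fun x => cdf (gaussianReal 0 1) x

/-- The inverse `Φ⁻¹` of the standard normal CDF (as a function on `(0,1)`). -/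
noncomputable def PhiInv : ℝ → ℝ := Function.invFun Phi

/-!
The left-hand side and `α` are the probabilities of the half-line `[Φ⁻¹(1 - α), ∞)` under `N(μ, 1)`
and `N(0, 1)`. By the Neyman–Pearson argument, `P₁(S) - e^ε P₀(S)` is largest, over all events `S`,
for the set where the density of `P₁` is at least `e^ε` times that of `P₀`. For two Gaussians of
equal variance the likelihood ratio is increasing, so this set is a half-line, and its
probabilities give exactly `δ_μ(ε)`.
-/

open scoped NNReal

section CDF

variable (P : Measure ℝ) [IsProbabilityMeasure P] [NullSingletonClass P]

lemma continuous_cdf : Continuous (cdf P) := by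
  refine continuous_iff_continuousAt.2 fun x ↦ ?_
  have no_jump : cdf P x - Function.leftLim (cdf P) x ≤ 0 := by
    rw [← ENNReal.ofReal_eq_zero, ← StieltjesFunction.measure_singleton, measure_cdf,
      measure_singleton]
  rw [(monotone_cdf P).continuousAt_iff_leftLim_eq_rightLim, StieltjesFunction.rightLim_eq]
  exact ((monotone_cdf P).leftLim_le le_rfl).antisymm (sub_nonpos.1 no_jump)

lemma Ioo_subset_range_cdf : Set.Ioo 0 1 ⊆ Set.range (cdf P) := fun _ hp ↦
  mem_range_of_exists_le_of_exists_ge (continuous_cdf P)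
    ((tendsto_cdf_atBot P).eventually (ge_mem_nhds hp.1)).exists
    ((tendsto_cdf_atTop P).eventually (le_mem_nhds hp.2)).exists

end CDF

lemma Phi_PhiInv {p : ℝ} (hp : p ∈ Set.Ioo 0 1) : Phi (PhiInv p) = p :=
  have := nullSingletonClass_gaussianReal (μ := 0) (one_ne_zero : (1 : ℝ≥0) ≠ 0)
  Function.invFun_eq (Ioo_subset_range_cdf (gaussianReal 0 1) hp)

section GaussianTails

variable {v : ℝ≥0}

-- The minus sign makes upper tails of `N(m, v)` correspond to lower tails of `N(0, 1)`.
lemma gaussianReal_eq_map_standard (m : ℝ) (v : ℝ≥0) :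
    gaussianReal m v = (gaussianReal 0 1).map (fun z ↦ m - √v * z) := by
  have := Measure.map_map (μ := gaussianReal 0 1) (f := (√v * ·)) (g := (m - ·))
    (by fun_prop) (by fun_prop)
  rw [gaussianReal_map_const_mul, gaussianReal_map_const_sub] at this
  rw [← Function.comp_def (m - ·) (√v * ·), ← this]
  congr 1
  · ring
  · ext; simp

lemma gaussianReal_real_Ici (m : ℝ) (hv : v ≠ 0) (x : ℝ) :
    (gaussianReal m v).real (Set.Ici x) = Phi ((m - x) / √v) := by
  have hσ : 0 < √(v : ℝ) := Real.sqrt_pos.2 (NNReal.coe_pos.2 (pos_iff_ne_zero.2 hv))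
  have preimage_Ici : (fun z ↦ m - √v * z) ⁻¹' Set.Ici x = Set.Iic ((m - x) / √v) := by
    ext z
    rw [Set.mem_preimage, Set.mem_Ici, Set.mem_Iic, le_div_iff₀' hσ, le_sub_comm]
  rw [gaussianReal_eq_map_standard, map_measureReal_apply (by fun_prop) measurableSet_Ici,
    preimage_Ici, Phi, cdf_eq_real]

lemma Phi_neg (x : ℝ) : Phi (-x) = 1 - Phi x := by
  have := nullSingletonClass_gaussianReal (μ := 0) (one_ne_zero : (1 : ℝ≥0) ≠ 0)
  calc Phi (-x) = (gaussianReal 0 1).real (Set.Ici x) := by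
        simp [gaussianReal_real_Ici 0 one_ne_zero]
    _ = (gaussianReal 0 1).real (Set.Iic x)ᶜ := by
        rw [Set.compl_Iic, measureReal_congr Ioi_ae_eq_Ici]
    _ = 1 - Phi x := by rw [probReal_compl_eq_one_sub measurableSet_Iic, Phi, cdf_eq_real]

end GaussianTails

section NeymanPearson

variable {v : ℝ≥0} {m₀ m₁ : ℝ}

lemma gaussianReal_real_eq_setIntegral (m : ℝ) (hv : v ≠ 0) (S : Set ℝ) :
    (gaussianReal m v).real S = ∫ x in S, gaussianPDFReal m v x := by
  rw [Measure.real, gaussianReal_apply_eq_integral m hv, ENNReal.toReal_ofReal]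
  exact integral_nonneg (gaussianPDFReal_nonneg m v)

lemma exp_mul_gaussianPDFReal_le_iff (hv : v ≠ 0) (hm : m₀ < m₁) (ε x : ℝ) :
    exp ε * gaussianPDFReal m₀ v x ≤ gaussianPDFReal m₁ v x ↔
      (m₀ + m₁) / 2 + v * ε / (m₁ - m₀) ≤ x := by
  have : (0 : ℝ) < v := NNReal.coe_pos.2 (pos_iff_ne_zero.2 hv)
  have hm' : 0 < m₁ - m₀ := sub_pos.2 hm
  have log_ratio : -(x - m₁) ^ 2 / (2 * v) - (ε + -(x - m₀) ^ 2 / (2 * v)) =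
      (m₁ - m₀) / v * (x - ((m₀ + m₁) / 2 + v * ε / (m₁ - m₀))) := by
    field_simp
    ring
  rw [gaussianPDFReal, gaussianPDFReal, mul_left_comm, ← Real.exp_add,
    mul_le_mul_iff_right₀ (by positivity), Real.exp_le_exp, ← sub_nonneg, log_ratio,
    mul_nonneg_iff_of_pos_left (by positivity), sub_nonneg]

lemma gaussianReal_real_sub_le_Ici (hv : v ≠ 0) (hm : m₀ < m₁) (ε : ℝ) {S : Set ℝ}
    (hS : MeasurableSet S) :
    (gaussianReal m₁ v).real S - exp ε * (gaussianReal m₀ v).real S ≤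
      (gaussianReal m₁ v).real (Set.Ici ((m₀ + m₁) / 2 + v * ε / (m₁ - m₀))) -
        exp ε * (gaussianReal m₀ v).real (Set.Ici ((m₀ + m₁) / 2 + v * ε / (m₁ - m₀))) := by
  set g : ℝ → ℝ := fun x ↦ gaussianPDFReal m₁ v x - exp ε * gaussianPDFReal m₀ v x
  have hi₁ : Integrable (gaussianPDFReal m₁ v) := integrable_gaussianPDFReal m₁ v
  have hi₀ : Integrable (fun x ↦ exp ε * gaussianPDFReal m₀ v x) :=
    (integrable_gaussianPDFReal m₀ v).const_mul _
  have g_measurable : StronglyMeasurable g :=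
    (stronglyMeasurable_gaussianPDFReal m₁ v).sub
      ((stronglyMeasurable_gaussianPDFReal m₀ v).const_mul _)
  have g_integral (T : Set ℝ) : (gaussianReal m₁ v).real T - exp ε * (gaussianReal m₀ v).real T =
      ∫ x in T, g x := by
    rw [gaussianReal_real_eq_setIntegral m₁ hv, gaussianReal_real_eq_setIntegral m₀ hv,
      ← integral_const_mul, ← integral_sub hi₁.restrict hi₀.restrict]
  have g_nonneg : {x | 0 ≤ g x} = Set.Ici ((m₀ + m₁) / 2 + v * ε / (m₁ - m₀)) := by
    ext x
    exact sub_nonneg.trans (exp_mul_gaussianPDFReal_le_iff hv hm ε x)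
  rw [g_integral, g_integral, ← g_nonneg]
  exact setIntegral_le_nonneg hS g_measurable (hi₁.sub hi₀)

end NeymanPearson

/-- The privacy profile `δ_μ(ε)` of `μ`-Gaussian differential privacy: for `μ > 0`, the least `δ`
such that `P₁(S) ≤ e^ε P₀(S) + δ` for every event `S`, where `P₀ = N(0, 1)` and `P₁ = N(μ, 1)`. -/
noncomputable def gaussianDelta (μ ε : ℝ) : ℝ :=
  Phi (-ε / μ + μ / 2) - exp ε * Phi (-ε / μ - μ / 2)

theorem gaussianReal_real_le_exp_mul_add_gaussianDelta {v : ℝ≥0} {m₀ m₁ : ℝ} (hv : v ≠ 0)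
    (hm : m₀ < m₁) (ε : ℝ) {S : Set ℝ} (hS : MeasurableSet S) :
    (gaussianReal m₁ v).real S ≤
      exp ε * (gaussianReal m₀ v).real S + gaussianDelta ((m₁ - m₀) / √v) ε := by
  have : 0 < √(v : ℝ) := Real.sqrt_pos.2 (NNReal.coe_pos.2 (pos_iff_ne_zero.2 hv))
  have hm' : m₁ - m₀ ≠ 0 := (sub_pos.2 hm).ne'
  have hσ_sq : (v : ℝ) = √v ^ 2 := (Real.sq_sqrt v.coe_nonneg).symm
  have arg₁ : (m₁ - ((m₀ + m₁) / 2 + v * ε / (m₁ - m₀))) / √v =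
      -ε / ((m₁ - m₀) / √v) + (m₁ - m₀) / √v / 2 := by
    field_simp
    rw [← hσ_sq]
    ring
  have arg₀ : (m₀ - ((m₀ + m₁) / 2 + v * ε / (m₁ - m₀))) / √v =
      -ε / ((m₁ - m₀) / √v) - (m₁ - m₀) / √v / 2 := by
    field_simp
    rw [← hσ_sq]
    ring
  have optimal := gaussianReal_real_sub_le_Ici hv hm ε hS
  rw [gaussianReal_real_Ici m₁ hv, gaussianReal_real_Ici m₀ hv, arg₁, arg₀] at optimal
  exact sub_le_iff_le_add'.1 optimal

theorem stmt_3_general {μ α : ℝ} (ε : ℝ) (hμ : 0 < μ) (hα : α ∈ Set.Ioo 0 1) :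
    1 - Phi (PhiInv (1 - α) - μ) ≤ exp ε * α + gaussianDelta μ ε := by
  have hΦ : Phi (PhiInv (1 - α)) = 1 - α := Phi_PhiInv ⟨sub_pos.2 hα.2, sub_lt_self 1 hα.1⟩
  have tail (m : ℝ) : (gaussianReal m 1).real (Set.Ici (PhiInv (1 - α))) =
      1 - Phi (PhiInv (1 - α) - m) := by
    rw [gaussianReal_real_Ici m one_ne_zero, ← Phi_neg, neg_sub, NNReal.coe_one, sqrt_one, div_one]
  simpa [tail, hΦ] using gaussianReal_real_le_exp_mul_add_gaussianDelta one_ne_zero hμ ε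
    (measurableSet_Ici (a := PhiInv (1 - α)))

/-- Analytic core of the conversion from `μ`-GDP to `(ε, δ)`-DP: the Gaussian
trade-off function `G_μ` dominates the trade-off function `f_{ε, δ_μ(ε)}`. -/
theorem stmt_3 (μ ε α : ℝ) (hμ : 0 < μ) (hε : 0 ≤ ε) (hα : α ∈ Set.Ioo (0 : ℝ) 1) :
    1 - Phi (PhiInv (1 - α) - μ) ≤
      Real.exp ε * α + (Phi (-ε / μ + μ / 2) - Real.exp ε * Phi (-ε / μ - μ / 2)) :=
  stmt_3_general ε hμ hα
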